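/- Let 1 ≤ i < j ≤ n and 1 ≤ k ≤ n. Then for every x ∈ U ∩ S^n, ⟨D_{e_k(x)} e_j(x), e_i(x)⟩ = −x_{i−1} δ_{k,j} / √(s_{i−1}(x) s_i(x)) = −⟨D_{e_k(x)} e_i(x), e_j(x)⟩. (Since e_i is tangent to S^n, these quantities equal the Christoffel symbols ⟨∇_{e_k} e_j, e_i⟩ of the Levi-Civita connection of S^n in the frame e_1, …, e_n.) -/

import Mathlib

open scoped InnerProductSpace BigOperators

noncomputable section

/-- `s_j(x) = ∑_{r=j}^n x_r²`. -/
def sfun (n j : ℕ) (x : EuclideanSpace ℝ (Fin (n + 1))) : ℝ :=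
  ∑ r : Fin (n + 1), if j ≤ (r : ℕ) then x r ^ 2 else 0

/-- The `j`-th coordinate of `x` (read as a natural-number index, `0` out of range). -/
def coordfun (n : ℕ) (x : EuclideanSpace ℝ (Fin (n + 1))) (j : ℕ) : ℝ :=
  if h : j < n + 1 then x ⟨j, h⟩ else 0

/-- The vector field `e_j(x) = √(s_j/s_{j-1}) ( −∂_{j−1} + (x_{j−1}/s_j) Σ_{r=j}^n x_r ∂_r )`. -/
def efun (n j : ℕ) (x : EuclideanSpace ℝ (Fin (n + 1))) : EuclideanSpace ℝ (Fin (n + 1)) :=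
  WithLp.toLp 2 fun r => Real.sqrt (sfun n j x / sfun n (j - 1) x) *
    (-(if (r : ℕ) = j - 1 then 1 else 0)
      + coordfun n x (j - 1) / sfun n j x * (if j ≤ (r : ℕ) then x r else 0))

/-- `U = {x ∈ ℝ^{n+1} : x_n > 0}`. -/
def Usph (n : ℕ) : Set (EuclideanSpace ℝ (Fin (n + 1))) := {x | 0 < coordfun n x n}

/-- The unit sphere `S^n ⊂ ℝ^{n+1}`. -/
def sph (n : ℕ) : Set (EuclideanSpace ℝ (Fin (n + 1))) :=
  {x | ∑ r : Fin (n + 1), x r ^ 2 = 1}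

/- Every `e_l` with `l > i` takes its values in the span of `∂_r`, `r ≥ i`, and hence so do its
derivatives `D_v e_l`. On that span `⟨·, e_i(x)⟩` is a multiple of `⟨·, x⟩`, because the `∂_{i-1}`
part of `e_i` is invisible there. So the Christoffel symbols reduce to `⟨D_v e_j, x⟩`, which is
`-⟨e_j(x), v⟩` since `⟨e_j(y), y⟩` vanishes identically. -/

section Calculus

variable {E F : Type*} [NormedAddCommGroup E] [NormedSpace ℝ E] [NormedAddCommGroup F]
  {f : E → F} {x : E}

theorem inner_fderiv_apply_eq_neg_of_eventually_inner_eq [InnerProductSpace ℝ F] {g : E → F}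
    {c : ℝ} (hf : DifferentiableAt ℝ f x) (hg : DifferentiableAt ℝ g x)
    (hfg : ∀ᶠ y in nhds x, ⟪f y, g y⟫_ℝ = c) (v : E) :
    ⟪fderiv ℝ f x v, g x⟫_ℝ = -⟪fderiv ℝ g x v, f x⟫_ℝ := by
  have hconst : fderiv ℝ (fun y => ⟪f y, g y⟫_ℝ) x v = 0 := by
    rw [Filter.EventuallyEq.fderiv_eq (f := fun _ => c) hfg, fderiv_fun_const]
    rfl
  rw [fderiv_inner_apply ℝ hf hg, real_inner_comm] at hconst
  exact eq_neg_of_add_eq_zero_right hconst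

theorem map_fderiv_apply_eq_of_eventually_map_eq [NormedSpace ℝ F] {L : F →L[ℝ] F}
    (hf : DifferentiableAt ℝ f x) (hL : ∀ᶠ y in nhds x, L (f y) = f y) (v : E) :
    L (fderiv ℝ f x v) = fderiv ℝ f x v := by
  have hcomp : HasFDerivAt f (L ∘L fderiv ℝ f x) x :=
    (L.hasFDerivAt.comp x hf.hasFDerivAt).congr_of_eventuallyEq (hL.mono fun _ h => h.symm)
  exact DFunLike.congr_fun (hcomp.unique hf.hasFDerivAt) v

end Calculus

/-- The orthogonal projection `x ↦ Σ_{r=j}^n x_r ∂_r` of `ℝ^{n+1}` onto the coordinates of index at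
least `j`, in terms of which `s_j` and `e_j` are given by coordinate-free formulas. -/
def tailProj (n j : ℕ) :
    EuclideanSpace ℝ (Fin (n + 1)) →L[ℝ] EuclideanSpace ℝ (Fin (n + 1)) :=
  Matrix.toEuclideanCLM (𝕜 := ℝ) (Matrix.diagonal fun r => if j ≤ (r : ℕ) then 1 else 0)

section TailProj

variable {n : ℕ}

theorem tailProj_apply (j : ℕ) (x : EuclideanSpace ℝ (Fin (n + 1))) (r : Fin (n + 1)) :
    tailProj n j x r = if j ≤ (r : ℕ) then x r else 0 := by
  simp [tailProj, Matrix.mulVec_diagonal]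

theorem tailProj_tailProj_of_le {i j : ℕ} (hij : i ≤ j) (x : EuclideanSpace ℝ (Fin (n + 1))) :
    tailProj n i (tailProj n j x) = tailProj n j x := by
  ext r
  simp only [tailProj_apply, ite_eq_left_iff]
  intro hr
  rw [if_neg (by lia)]

theorem tailProj_single_of_le {i : ℕ} {j : Fin (n + 1)} (hij : i ≤ j) (a : ℝ) :
    tailProj n i (EuclideanSpace.single j a) = EuclideanSpace.single j a := by
  ext r
  by_cases hr : r = j <;> simp [tailProj_apply, hr, hij]

theorem tailProj_eq_single_add (j : Fin (n + 1)) (x : EuclideanSpace ℝ (Fin (n + 1))) :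
    tailProj n j x = EuclideanSpace.single j (x j) + tailProj n (j + 1) x := by
  ext r
  rcases lt_trichotomy r j with hr | rfl | hr
  · simp [tailProj_apply, hr.ne, hr.not_ge, hr.not_gt]
  · simp [tailProj_apply]
  · simp [tailProj_apply, hr.ne', hr.le, hr]

theorem inner_tailProj_right (j : ℕ) (w x : EuclideanSpace ℝ (Fin (n + 1))) :
    ⟪w, tailProj n j x⟫_ℝ = ⟪tailProj n j w, x⟫_ℝ := by
  simp only [PiLp.inner_apply, tailProj_apply, RCLike.inner_apply, conj_trivial, ite_mul, mul_ite,
    zero_mul, mul_zero]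

theorem inner_tailProj_self (j : ℕ) (x : EuclideanSpace ℝ (Fin (n + 1))) :
    ⟪x, tailProj n j x⟫_ℝ = sfun n j x := by
  simp only [PiLp.inner_apply, tailProj_apply, RCLike.inner_apply, conj_trivial, ite_mul, zero_mul,
    sfun, sq]

end TailProj

section Coordinates

variable {n : ℕ} {x : EuclideanSpace ℝ (Fin (n + 1))}

theorem coordfun_val (j : Fin (n + 1)) (x : EuclideanSpace ℝ (Fin (n + 1))) :
    coordfun n x j = x j := by
  rw [coordfun, dif_pos j.isLt]

theorem sfun_eq_sq_add_sfun_succ (j : Fin (n + 1)) (x : EuclideanSpace ℝ (Fin (n + 1))) :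
    sfun n j x = x j ^ 2 + sfun n (j + 1) x := by
  rw [← inner_tailProj_self, tailProj_eq_single_add, inner_add_right, inner_tailProj_self,
    EuclideanSpace.inner_single_right, conj_trivial, sq]

theorem sfun_antitone (x : EuclideanSpace ℝ (Fin (n + 1))) : Antitone fun j => sfun n j x := by
  intro i j hij
  refine Finset.sum_le_sum fun r _ => ?_
  by_cases hr : j ≤ (r : ℕ)
  · simp [hr, hij.trans hr]
  · rw [if_neg hr]
    positivity

theorem sfun_nonneg (j : ℕ) (x : EuclideanSpace ℝ (Fin (n + 1))) : 0 ≤ sfun n j x := by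
  unfold sfun
  positivity

theorem sfun_pos_of_mem_Usph {j : ℕ} (hj : j ≤ n) (hx : x ∈ Usph n) : 0 < sfun n j x := by
  have hxn : 0 < x (Fin.last n) := coordfun_val (Fin.last n) x ▸ hx
  calc 0 < x (Fin.last n) ^ 2 + sfun n (n + 1) x :=
        add_pos_of_pos_of_nonneg (pow_pos hxn 2) (sfun_nonneg _ x)
    _ = sfun n n x := (sfun_eq_sq_add_sfun_succ (Fin.last n) x).symm
    _ ≤ sfun n j x := sfun_antitone x hj

theorem le_of_sfun_pos {j : ℕ} (hx : 0 < sfun n j x) : j ≤ n := by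
  obtain ⟨r, -, hr⟩ := Finset.exists_ne_zero_of_sum_ne_zero hx.ne'
  have hjr : j ≤ (r : ℕ) := (ite_ne_right_iff.1 hr).1
  lia

theorem differentiable_sfun (n j : ℕ) : Differentiable ℝ (sfun n j) := by
  rw [← funext (inner_tailProj_self j)]
  exact differentiable_id.inner ℝ (tailProj n j).differentiable

theorem eventually_sfun_pos {j : ℕ} (hx : 0 < sfun n j x) : ∀ᶠ y in nhds x, 0 < sfun n j y :=
  (differentiable_sfun n j).continuous.continuousAt.eventually_const_lt hx

end Coordinates

section Frame

variable {n : ℕ} {i j k : Fin (n + 1)} {x : EuclideanSpace ℝ (Fin (n + 1))}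

theorem efun_succ (j : Fin (n + 1)) (x : EuclideanSpace ℝ (Fin (n + 1))) :
    efun n (j + 1) x = √(sfun n (j + 1) x / sfun n j x) •
      ((x j / sfun n (j + 1) x) • tailProj n (j + 1) x - EuclideanSpace.single j 1) := by
  ext r
  simp only [efun, Nat.add_sub_cancel, coordfun_val, tailProj_apply, Fin.ext_iff, PiLp.smul_apply,
    PiLp.sub_apply, PiLp.single_apply, smul_eq_mul]
  ring

theorem differentiableAt_efun_succ (hx : 0 < sfun n (j + 1) x) :
    DifferentiableAt ℝ (efun n (j + 1)) x := by
  have hx' : 0 < sfun n j x := hx.trans_le (sfun_antitone x j.val.le_succ)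
  have hs := differentiable_sfun n (j + 1) x
  have hs' := differentiable_sfun n j x
  rw [funext (efun_succ j)]
  have hratio : DifferentiableAt ℝ (fun y => √(sfun n (j + 1) y / sfun n j y)) x := by
    simp only [div_eq_mul_inv]
    exact (hs.fun_mul (hs'.fun_inv hx'.ne')).sqrt (mul_pos hx (inv_pos.2 hx')).ne'
  have hcoef : DifferentiableAt ℝ (fun y => y j / sfun n (j + 1) y) x := by
    simp only [div_eq_mul_inv]
    exact DifferentiableAt.fun_mul (by fun_prop) (hs.fun_inv hx.ne')
  fun_prop

theorem tailProj_efun_succ {i : ℕ} (hij : i ≤ j) (x : EuclideanSpace ℝ (Fin (n + 1))) :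
    tailProj n i (efun n (j + 1) x) = efun n (j + 1) x := by
  rw [efun_succ, map_smul, map_sub, map_smul, tailProj_tailProj_of_le (hij.trans j.val.le_succ),
    tailProj_single_of_le hij]

theorem inner_efun_succ (j : Fin (n + 1)) (w x : EuclideanSpace ℝ (Fin (n + 1))) :
    ⟪w, efun n (j + 1) x⟫_ℝ = √(sfun n (j + 1) x / sfun n j x) *
      (x j / sfun n (j + 1) x * ⟪w, tailProj n (j + 1) x⟫_ℝ - w j) := by
  simp only [efun_succ, inner_smul_right, inner_sub_right, EuclideanSpace.inner_single_right,
    conj_trivial, one_mul]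

theorem inner_self_efun_succ (hx : 0 < sfun n (j + 1) x) : ⟪x, efun n (j + 1) x⟫_ℝ = 0 := by
  rw [inner_efun_succ, inner_tailProj_self, div_mul_cancel₀ _ hx.ne', sub_self, mul_zero]

theorem inner_efun_succ_of_tailProj_eq {w : EuclideanSpace ℝ (Fin (n + 1))}
    (hw : tailProj n (j + 1) w = w) (x : EuclideanSpace ℝ (Fin (n + 1))) :
    ⟪w, efun n (j + 1) x⟫_ℝ = x j / √(sfun n j x * sfun n (j + 1) x) * ⟪w, x⟫_ℝ := by
  have hwj : w j = 0 := by
    rw [← hw, tailProj_apply, if_neg (by simp)]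
  have hcoef : √(sfun n (j + 1) x / sfun n j x) * (x j / sfun n (j + 1) x) =
      x j / √(sfun n j x * sfun n (j + 1) x) :=
    calc _ = x j / √(sfun n j x) * (√(sfun n (j + 1) x) / sfun n (j + 1) x) := by
          rw [Real.sqrt_div (sfun_nonneg _ x)]
          ring
      _ = _ := by
          rw [Real.sqrt_div_self, Real.sqrt_mul (sfun_nonneg _ x)]
          ring
  rw [inner_efun_succ, hwj, sub_zero, inner_tailProj_right, hw, ← mul_assoc, hcoef]

theorem inner_efun_succ_efun_succ_of_lt (hij : i < j) (hx : 0 < sfun n (j + 1) x) :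
    ⟪efun n (j + 1) x, efun n (i + 1) x⟫_ℝ = 0 := by
  rw [inner_efun_succ_of_tailProj_eq (tailProj_efun_succ hij x), real_inner_comm,
    inner_self_efun_succ hx, mul_zero]

theorem inner_efun_succ_efun_succ_self (hx : 0 < sfun n (j + 1) x) :
    ⟪efun n (j + 1) x, efun n (j + 1) x⟫_ℝ = 1 := by
  have hx' : 0 < sfun n j x := hx.trans_le (sfun_antitone x j.val.le_succ)
  have htail : ⟪efun n (j + 1) x, tailProj n (j + 1) x⟫_ℝ =
      √(sfun n (j + 1) x / sfun n j x) * x j := by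
    rw [real_inner_comm, inner_efun_succ, inner_tailProj_right, tailProj_tailProj_of_le le_rfl,
      real_inner_comm, inner_tailProj_self, div_mul_cancel₀ _ hx.ne', tailProj_apply,
      if_neg (by simp), sub_zero]
  have hcoord : efun n (j + 1) x j = -√(sfun n (j + 1) x / sfun n j x) := by
    simp [efun_succ, tailProj_apply]
  calc ⟪efun n (j + 1) x, efun n (j + 1) x⟫_ℝ
      = √(sfun n (j + 1) x / sfun n j x) ^ 2 * (x j ^ 2 / sfun n (j + 1) x + 1) := by
        rw [inner_efun_succ, htail, hcoord]
        ring
    _ = sfun n (j + 1) x / sfun n j x * (sfun n j x / sfun n (j + 1) x) := by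
        rw [Real.sq_sqrt (div_pos hx hx').le, div_add_one hx.ne', ← sfun_eq_sq_add_sfun_succ]
    _ = 1 := by
        rw [div_mul_div_cancel₀ hx'.ne', div_self hx.ne']

theorem inner_efun_succ_efun_succ (hj : 0 < sfun n (j + 1) x) (hk : 0 < sfun n (k + 1) x) :
    ⟪efun n (j + 1) x, efun n (k + 1) x⟫_ℝ = if k = j then 1 else 0 := by
  rcases lt_trichotomy k j with h | rfl | h
  · rw [if_neg h.ne, inner_efun_succ_efun_succ_of_lt h hj]
  · rw [if_pos rfl, inner_efun_succ_efun_succ_self hj]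
  · rw [if_neg h.ne', real_inner_comm, inner_efun_succ_efun_succ_of_lt h hk]

theorem inner_fderiv_efun_succ_self (hx : 0 < sfun n (j + 1) x)
    (v : EuclideanSpace ℝ (Fin (n + 1))) :
    ⟪fderiv ℝ (efun n (j + 1)) x v, x⟫_ℝ = -⟪efun n (j + 1) x, v⟫_ℝ := by
  have horth : ∀ᶠ y in nhds x, ⟪efun n (j + 1) y, y⟫_ℝ = 0 :=
    (eventually_sfun_pos hx).mono fun y hy => by rw [real_inner_comm, inner_self_efun_succ hy]
  rw [inner_fderiv_apply_eq_neg_of_eventually_inner_eq (differentiableAt_efun_succ hx)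
    differentiableAt_fun_id horth, fderiv_fun_id, ContinuousLinearMap.id_apply, real_inner_comm]

theorem inner_fderiv_efun_succ_efun_succ (hij : i < j) (hx : 0 < sfun n (j + 1) x)
    (v : EuclideanSpace ℝ (Fin (n + 1))) :
    ⟪fderiv ℝ (efun n (j + 1)) x v, efun n (i + 1) x⟫_ℝ =
      -(x i * ⟪efun n (j + 1) x, v⟫_ℝ) / √(sfun n i x * sfun n (i + 1) x) := by
  have htail : tailProj n (i + 1) (fderiv ℝ (efun n (j + 1)) x v) =
      fderiv ℝ (efun n (j + 1)) x v :=
    map_fderiv_apply_eq_of_eventually_map_eq (differentiableAt_efun_succ hx)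
      (Filter.Eventually.of_forall (tailProj_efun_succ hij)) v
  rw [inner_efun_succ_of_tailProj_eq htail, inner_fderiv_efun_succ_self hx]
  ring

theorem inner_fderiv_efun_succ_antisymm (hij : i < j) (hx : 0 < sfun n (j + 1) x)
    (v : EuclideanSpace ℝ (Fin (n + 1))) :
    ⟪fderiv ℝ (efun n (j + 1)) x v, efun n (i + 1) x⟫_ℝ =
      -⟪fderiv ℝ (efun n (i + 1)) x v, efun n (j + 1) x⟫_ℝ :=
  inner_fderiv_apply_eq_neg_of_eventually_inner_eq (differentiableAt_efun_succ hx)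
    (differentiableAt_efun_succ (hx.trans_le (sfun_antitone x (Nat.succ_le_succ hij.le))))
    ((eventually_sfun_pos hx).mono fun _ => inner_efun_succ_efun_succ_of_lt hij) v

end Frame

theorem statement1_general (n i j k : ℕ) (hi : 1 ≤ i) (hij : i < j) (hk : 1 ≤ k)
    (x : EuclideanSpace ℝ (Fin (n + 1))) (hxj : 0 < sfun n j x) (hxk : 0 < sfun n k x) :
    ⟪fderiv ℝ (efun n j) x (efun n k x), efun n i x⟫_ℝ
        = -(coordfun n x (i - 1) * (if k = j then 1 else 0))
            / Real.sqrt (sfun n (i - 1) x * sfun n i x) ∧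
    ⟪fderiv ℝ (efun n j) x (efun n k x), efun n i x⟫_ℝ
        = -⟪fderiv ℝ (efun n i) x (efun n k x), efun n j x⟫_ℝ := by
  have hshift : ∀ l, 1 ≤ l → l ≤ n → ∃ m : Fin (n + 1), l = m + 1 := fun l hl hln =>
    ⟨⟨l - 1, by lia⟩, (Nat.sub_add_cancel hl).symm⟩
  have hjn := le_of_sfun_pos hxj
  obtain ⟨i, rfl⟩ := hshift i hi (hij.le.trans hjn)
  obtain ⟨j, rfl⟩ := hshift j (hi.trans hij.le) hjn
  obtain ⟨k, rfl⟩ := hshift k hk (le_of_sfun_pos hxk)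
  have hij' : i < j := Nat.lt_of_succ_lt_succ hij
  refine ⟨?_, inner_fderiv_efun_succ_antisymm hij' hxj _⟩
  rw [inner_fderiv_efun_succ_efun_succ hij' hxj, inner_efun_succ_efun_succ hxj hxk]
  simp only [Nat.add_sub_cancel, coordfun_val, Nat.add_right_cancel_iff, Fin.ext_iff]

/-- Lemma 6 (Lemma `\ref{LemmaGamma}`): for `1 ≤ i < j ≤ n`, `1 ≤ k ≤ n` and `x ∈ U ∩ S^n`,
`⟨D_{e_k(x)} e_j(x), e_i(x)⟩ = −x_{i−1} δ_{k,j} / √(s_{i−1}(x) s_i(x)) = −⟨D_{e_k(x)} e_i(x), e_j(x)⟩`. -/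
theorem statement1 (n i j k : ℕ) (hi : 1 ≤ i) (hij : i < j) (hj : j ≤ n)
    (hk : 1 ≤ k) (hkn : k ≤ n)
    (x : EuclideanSpace ℝ (Fin (n + 1))) (hxU : x ∈ Usph n) (hxS : x ∈ sph n) :
    ⟪fderiv ℝ (efun n j) x (efun n k x), efun n i x⟫_ℝ
        = -(coordfun n x (i - 1) * (if k = j then 1 else 0))
            / Real.sqrt (sfun n (i - 1) x * sfun n i x) ∧
    ⟪fderiv ℝ (efun n j) x (efun n k x), efun n i x⟫_ℝ
        = -⟪fderiv ℝ (efun n i) x (efun n k x), efun n j x⟫_ℝ :=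
  statement1_general n i j k hi hij hk x (sfun_pos_of_mem_Usph hj hxU)
    (sfun_pos_of_mem_Usph hkn hxU)
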